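/- Let S be a CFCST system over Σ. Every labelled sequent derivable in G3Km(S) is derivable in the refined labelled calculus Km(S)L. -/

import Mathlib

/-!
Labelled sequent calculi for context-free grammar logics with converse.
-/

namespace GrammarLogic

/-- Modal formulae in negation normal form over the alphabet `α`:
literals `p`, `p̄`, and the connectives `∨`, `∧`, `⟨x⟩`, `[x]` (`x ∈ α`). -/
inductive Fml (α : Type) : Type
  | pos : ℕ → Fml α
  | neg : ℕ → Fml α
  | or  : Fml α → Fml α → Fml α
  | and : Fml α → Fml α → Fml α
  | dia : α → Fml α → Fml α
  | box : α → Fml α → Fml α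

/-- Multisets of relational atoms `R_x w u` (labels are natural numbers). -/
abbrev RAtms (α : Type) : Type := Multiset (α × ℕ × ℕ)

/-- Multisets of labelled formulae `w : φ`. -/
abbrev LFmls (α : Type) : Type := Multiset (ℕ × Fml α)

/-- The converse `s̄` of a string: reverse and apply the converse characterwise. -/
def strConv {α : Type} (bar : α → α) (s : List α) : List α := s.reverse.map bar

/-- A context-free converse-closed string rewriting (CFCST) system over `α`
with converse operation `bar`: a finite set of production rules closed under
converses. -/
structure CFCST (α : Type) (bar : α → α) : Type where
  rules : Set (α × List α)
  finite : rules.Finite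
  closed : ∀ x s, (x, s) ∈ rules ↔ (bar x, strConv bar s) ∈ rules

/-- One-step rewriting: replace an occurrence of the head of a production rule
by its body. -/
def OneStep {α : Type} (P : Set (α × List α)) (s t : List α) : Prop :=
  ∃ u v x r, (x, r) ∈ P ∧ s = u ++ x :: v ∧ t = u ++ r ++ v

/-- `Lang P x s` iff `x →*_S s`, i.e. `s ∈ L_S(x)`. -/
def Lang {α : Type} (P : Set (α × List α)) (x : α) (s : List α) : Prop :=
  Relation.ReflTransGen (OneStep P) [x] s

/-- Edges of the propagation graph determined by the relational atoms `R`: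
each `R_x w u` in `R` gives an edge `(w,u)` labelled `x` and an edge `(u,w)`
labelled `x̄`. -/
def Edge {α : Type} (bar : α → α) (R : RAtms α) (w u : ℕ) (c : α) : Prop :=
  (c, w, u) ∈ R ∨ (bar c, u, w) ∈ R

/-- `PPath bar R w u s`: there is a (possibly empty) propagation path from `w`
to `u` in the propagation graph determined by `R` whose string is `s`. -/
inductive PPath {α : Type} (bar : α → α) (R : RAtms α) : ℕ → ℕ → List α → Prop
  | nil (w : ℕ) : PPath bar R w w []
  | cons {w u v : ℕ} {c : α} {s : List α} :
      Edge bar R w u c → PPath bar R u v s → PPath bar R w v (c :: s)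

/-- Side condition of the propagation rule `(Pr_⟨x⟩)`: there is a propagation
path from `w` to `u` whose string belongs to `L_S(x)`. -/
def PropCond {α : Type} (bar : α → α) (P : Set (α × List α)) (R : RAtms α)
    (x : α) (w u : ℕ) : Prop :=
  ∃ s, PPath bar R w u s ∧ Lang P x s

/-- The label `v` occurs in the labelled sequent `R ⊢ Γ`. -/
def occursIn {α : Type} (v : ℕ) (R : RAtms α) (Γ : LFmls α) : Prop :=
  (∃ x w u, (x, w, u) ∈ R ∧ (v = w ∨ v = u)) ∨ ∃ φ, (v, φ) ∈ Γ

/-- `ChainR s w u C`: the multiset `C` is a chain of relational atoms `R_s w u`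
(for `s = ε` it is empty and `u = w`). -/
inductive ChainR {α : Type} : List α → ℕ → ℕ → RAtms α → Prop
  | nil (w : ℕ) : ChainR [] w w 0
  | cons {y : α} {s : List α} {w v u : ℕ} {C : RAtms α} :
      ChainR s v u C → ChainR (y :: s) w u ((y, w, v) ::ₘ C)

/-- Gated labelled sequent calculi for grammar logics.  The rules `(id)`, `(∨r)`,
`(∧r)` and `([x])` are always present; the rules `(⟨x⟩)`, the propagation rules
`(Pr_⟨x⟩)`, the structural rules `(p^x_s)` (for `x → s ∈ P`) and the converse
rules `(C1^x)` are present exactly when the respective gates `gDia`, `gPr`,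
`gProd`, `gCnv` hold.  In particular, `Der bar P True False True True` is the
labelled calculus `G3Km(S)` and `Der bar P False True False False` is the
refined labelled calculus `Km(S)L`. -/
inductive Der {α : Type} (bar : α → α) (P : Set (α × List α))
    (gDia gPr gProd gCnv : Prop) : RAtms α → LFmls α → Prop
  | id (R : RAtms α) (Γ : LFmls α) (w p : ℕ) :
      Der bar P gDia gPr gProd gCnv R ((w, Fml.pos p) ::ₘ (w, Fml.neg p) ::ₘ Γ)
  | orr {R : RAtms α} {Γ : LFmls α} {w : ℕ} {φ ψ : Fml α} :
      Der bar P gDia gPr gProd gCnv R ((w, φ) ::ₘ (w, ψ) ::ₘ Γ) →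
      Der bar P gDia gPr gProd gCnv R ((w, Fml.or φ ψ) ::ₘ Γ)
  | andr {R : RAtms α} {Γ : LFmls α} {w : ℕ} {φ ψ : Fml α} :
      Der bar P gDia gPr gProd gCnv R ((w, φ) ::ₘ Γ) →
      Der bar P gDia gPr gProd gCnv R ((w, ψ) ::ₘ Γ) →
      Der bar P gDia gPr gProd gCnv R ((w, Fml.and φ ψ) ::ₘ Γ)
  | boxr {R : RAtms α} {Γ : LFmls α} {w u : ℕ} {x : α} {φ : Fml α} :
      ¬ occursIn u R ((w, Fml.box x φ) ::ₘ Γ) →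
      Der bar P gDia gPr gProd gCnv ((x, w, u) ::ₘ R) ((u, φ) ::ₘ Γ) →
      Der bar P gDia gPr gProd gCnv R ((w, Fml.box x φ) ::ₘ Γ)
  | diar {R : RAtms α} {Γ : LFmls α} {w u : ℕ} {x : α} {φ : Fml α} :
      gDia →
      Der bar P gDia gPr gProd gCnv ((x, w, u) ::ₘ R)
        ((w, Fml.dia x φ) ::ₘ (u, φ) ::ₘ Γ) →
      Der bar P gDia gPr gProd gCnv ((x, w, u) ::ₘ R) ((w, Fml.dia x φ) ::ₘ Γ)
  | pr {R : RAtms α} {Γ : LFmls α} {w u : ℕ} {x : α} {φ : Fml α} :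
      gPr → PropCond bar P R x w u →
      Der bar P gDia gPr gProd gCnv R ((w, Fml.dia x φ) ::ₘ (u, φ) ::ₘ Γ) →
      Der bar P gDia gPr gProd gCnv R ((w, Fml.dia x φ) ::ₘ Γ)
  | prodr {R C : RAtms α} {Γ : LFmls α} {x : α} {s : List α} {w u : ℕ} :
      gProd → (x, s) ∈ P → ChainR s w u C →
      Der bar P gDia gPr gProd gCnv (C + ((x, w, u) ::ₘ R)) Γ →
      Der bar P gDia gPr gProd gCnv (C + R) Γ
  | cnvr {R : RAtms α} {Γ : LFmls α} {x : α} {w u : ℕ} :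
      gCnv →
      Der bar P gDia gPr gProd gCnv ((x, w, u) ::ₘ (bar x, u, w) ::ₘ R) Γ →
      Der bar P gDia gPr gProd gCnv ((x, w, u) ::ₘ R) Γ

/-- The labelled calculus `G3Km(S)`. -/
abbrev G3Km {α : Type} (bar : α → α) (S : CFCST α bar) : RAtms α → LFmls α → Prop :=
  Der bar S.rules True False True True

/-- The refined labelled calculus `Km(S)L`. -/
abbrev KmL {α : Type} (bar : α → α) (S : CFCST α bar) : RAtms α → LFmls α → Prop :=
  Der bar S.rules False True False False

theorem PPath.append {α : Type} {bar : α → α} {R : RAtms α} {w u v : ℕ} {s t : List α}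
    (h : PPath bar R w u s) (h' : PPath bar R u v t) : PPath bar R w v (s ++ t) := by
  induction h with
  | nil w => exact h'
  | cons e _ ih => exact PPath.cons e (ih h')

theorem PPath.mono {α : Type} {bar : α → α} {R R' : RAtms α} {w u : ℕ} {s : List α}
    (hR : ∀ a ∈ R, a ∈ R') (h : PPath bar R w u s) : PPath bar R' w u s := by
  induction h with
  | nil w => exact PPath.nil w
  | cons e _ ih => exact PPath.cons (e.imp (hR _) (hR _)) ih

theorem PPath.conv {α : Type} {bar : α → α} (hbar : Function.Involutive bar) {R : RAtms α}
    {w u : ℕ} {s : List α} (h : PPath bar R w u s) : PPath bar R u w (strConv bar s) := by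
  induction h with
  | nil w => exact PPath.nil w
  | @cons w u v c s e _ ih =>
    have e' : Edge bar R u w (bar c) := by
      rcases e with e | e
      · right; rw [hbar c]; exact e
      · left; exact e
    have := ih.append (PPath.cons e' (PPath.nil w))
    simpa [strConv] using this

theorem OneStep.conv {α : Type} {bar : α → α} (S : CFCST α bar) {s t : List α}
    (h : OneStep S.rules s t) : OneStep S.rules (strConv bar s) (strConv bar t) := by
  obtain ⟨u, v, x, r, hr, rfl, rfl⟩ := h
  exact ⟨strConv bar v, strConv bar u, bar x, strConv bar r, (S.closed x r).1 hr,
    by simp [strConv], by simp [strConv]⟩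

theorem Lang.conv {α : Type} {bar : α → α} (S : CFCST α bar) {x : α} {t : List α}
    (h : Lang S.rules x t) : Lang S.rules (bar x) (strConv bar t) :=
  Relation.ReflTransGen.lift (strConv bar) (fun _ _ => OneStep.conv S) _ _ h

theorem OneStep.context {α : Type} {P : Set (α × List α)} (a b : List α) {s t : List α}
    (h : OneStep P s t) : OneStep P (a ++ s ++ b) (a ++ t ++ b) := by
  obtain ⟨u, v, x, r, hr, rfl, rfl⟩ := h
  exact ⟨a ++ u, v ++ b, x, r, hr, by simp, by simp⟩

theorem steps_append {α : Type} {P : Set (α × List α)} {s s' t t' : List α}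
    (h : Relation.ReflTransGen (OneStep P) s s') (h' : Relation.ReflTransGen (OneStep P) t t') :
    Relation.ReflTransGen (OneStep P) (s ++ t) (s' ++ t') := by
  have h1 : Relation.ReflTransGen (OneStep P) (s ++ t) (s' ++ t) :=
    Relation.ReflTransGen.lift (fun l => l ++ t)
      (fun _ _ h => by simpa [Function.onFun] using OneStep.context [] t h) _ _ h
  have h2 : Relation.ReflTransGen (OneStep P) (s' ++ t) (s' ++ t') :=
    Relation.ReflTransGen.lift (fun l => s' ++ l)
      (fun _ _ h => by simpa [Function.onFun] using OneStep.context s' [] h) _ _ h'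
  exact h1.trans h2

theorem PropCond.mono {α : Type} {bar : α → α} {P : Set (α × List α)} {R R' : RAtms α}
    {x : α} {w u : ℕ} (hR : ∀ a ∈ R, a ∈ R') (h : PropCond bar P R x w u) :
    PropCond bar P R' x w u := by
  obtain ⟨s, h1, h2⟩ := h
  exact ⟨s, h1.mono hR, h2⟩

theorem PropCond.of_mem {α : Type} {bar : α → α} {P : Set (α × List α)} {R : RAtms α}
    {x : α} {w u : ℕ} (h : (x, w, u) ∈ R) : PropCond bar P R x w u :=
  ⟨[x], PPath.cons (Or.inl h) (PPath.nil u), Relation.ReflTransGen.refl⟩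

/-- A chain all of whose atoms are simulated is simulated. -/
theorem ChainR.path {α : Type} {bar : α → α} {P : Set (α × List α)} {R C : RAtms α}
    {s : List α} {w u : ℕ} (h : ChainR s w u C)
    (hC : ∀ x w u, (x, w, u) ∈ C → PropCond bar P R x w u) :
    ∃ t, PPath bar R w u t ∧ Relation.ReflTransGen (OneStep P) s t := by
  induction h with
  | nil w => exact ⟨[], PPath.nil w, Relation.ReflTransGen.refl⟩
  | @cons y s w v u C _ ih =>
    obtain ⟨t, h1, h2⟩ := ih fun x w u h => hC x w u (Multiset.mem_cons_of_mem h)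
    obtain ⟨tt, hpath, hsteps⟩ := hC y w v (Multiset.mem_cons_self _ _)
    exact ⟨tt ++ t, hpath.append h1, steps_append hsteps h2⟩

/-- Generalization: relational atoms that are simulated by propagation paths may be dropped. -/
theorem g3Km_simulate {α : Type} (bar : α → α) (hbar : Function.Involutive bar)
    (S : CFCST α bar) (R : RAtms α) (Γ : LFmls α) (h : G3Km bar S R Γ) :
    ∀ R' : RAtms α, (∀ a ∈ R', a ∈ R) →
      (∀ x w u, (x, w, u) ∈ R → PropCond bar S.rules R' x w u) → KmL bar S R' Γ := by
  induction h with
  | id R Γ w p => intro R' _ _; exact Der.id _ _ _ _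
  | orr _ ih => intro R' h1 h2; exact Der.orr (ih R' h1 h2)
  | andr _ _ ih ih' => intro R' h1 h2; exact Der.andr (ih R' h1 h2) (ih' R' h1 h2)
  | @boxr R Γ w u x φ hu _ ih =>
    intro R' h1 h2
    refine Der.boxr (u := u) ?_ (ih _ ?_ ?_)
    · rintro (⟨y, a, b, hm, hv⟩ | hm)
      · exact hu (Or.inl ⟨y, a, b, h1 _ hm, hv⟩)
      · exact hu (Or.inr hm)
    · intro a ha
      rcases Multiset.mem_cons.1 ha with rfl | ha
      · exact Multiset.mem_cons_self _ _
      · exact Multiset.mem_cons_of_mem (h1 _ ha)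
    · intro y a b hm
      rcases Multiset.mem_cons.1 hm with he | hm
      · rw [← he]
        exact PropCond.of_mem (Multiset.mem_cons_self _ _)
      · exact (h2 y a b hm).mono fun _ h => Multiset.mem_cons_of_mem h
  | diar _ _ ih =>
    intro R' h1 h2
    exact Der.pr trivial (h2 _ _ _ (Multiset.mem_cons_self _ _)) (ih R' h1 h2)
  | pr hf => exact hf.elim
  | @prodr R C Γ x s w u _ hx hc _ ih =>
    intro R' h1 h2
    refine ih R' ?_ ?_
    · intro a ha
      have := h1 a ha
      simp only [Multiset.mem_add, Multiset.mem_cons] at this ⊢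
      tauto
    · intro y a b hm
      simp only [Multiset.mem_add, Multiset.mem_cons] at hm
      rcases hm with hm | he | hm
      · exact h2 y a b (Multiset.mem_add.2 (Or.inl hm))
      · cases he
        obtain ⟨t, ht, ht'⟩ := hc.path
          fun y a b hm => h2 y a b (Multiset.mem_add.2 (Or.inl hm))
        exact ⟨t, ht, Relation.ReflTransGen.head
          ⟨[], [], x, s, hx, by simp, by simp⟩ ht'⟩
      · exact h2 y a b (Multiset.mem_add.2 (Or.inr hm))
  | @cnvr R Γ x w u _ _ ih =>
    intro R' h1 h2
    refine ih R' ?_ ?_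
    · intro a ha
      have := h1 a ha
      simp only [Multiset.mem_cons] at this ⊢
      tauto
    · intro y a b hm
      simp only [Multiset.mem_cons] at hm
      rcases hm with he | he | hm
      · cases he
        exact h2 _ _ _ (Multiset.mem_cons_self _ _)
      · cases he
        obtain ⟨t, ht, ht'⟩ := h2 x w u (Multiset.mem_cons_self _ _)
        exact ⟨_, ht.conv hbar, ht'.conv S⟩
      · exact h2 y a b (Multiset.mem_cons_of_mem hm)

/-- Let `S` be a CFCST system over `Σ`.  Every labelled sequent
derivable in `G3Km(S)` is derivable in the refined labelled calculus `Km(S)L`. -/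
theorem g3Km_to_kmL {α : Type} (bar : α → α) (hbar : Function.Involutive bar)
    (S : CFCST α bar) (R : RAtms α) (Γ : LFmls α)
    (h : G3Km bar S R Γ) : KmL bar S R Γ := by
  exact g3Km_simulate bar hbar S R Γ h R (fun _ h => h) fun _ _ _ h => PropCond.of_mem h

end GrammarLogic
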